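/- arXiv:math/0411414 — 3 statements merged into one kernel-verified Lean document; each statement's English description precedes it below -/
import Mathlib

section
/- Let K be an algebraically closed field of characteristic zero and let f ∈ K[x] be a monic reciprocal polynomial of even degree d. Then the sequence {r_n(f)}_{n≥1} of cyclic resultants of f obeys a polynomial recurrence of length d/2 + 1; that is, there exists a nonzero polynomial P ∈ K[x_1, …, x_{d/2+1}] such that P(r_n, r_{n+1}, …, r_{n+d/2}) = 0 for all n ≥ 1. -/
/-!
Let `L` be a splitting field of `f`. If `1` is a root of `f`, every `r_n` vanishes. Otherwise the
roots come in pairs `μ, μ⁻¹` (the root `-1`, being the only self-paired one, has even multiplicity),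
so `r_n = F(μ₁ⁿ, …, μ_kⁿ)` with `k = d / 2` and `F = ∏ (X_j - 1) (X_j⁻¹ - 1)`. The `k + 1` Laurent
polynomials `F(μ₁ⁱ X₁, …, μ_kⁱ X_k)`, `0 ≤ i ≤ k`, lie in a domain of transcendence degree `k` over
`K`, hence satisfy an algebraic relation over `K`; substituting `X_j = μ_jⁿ` turns it into the
recurrence.
-/

open Polynomial

theorem exists_eq_add_map_of_involutive {α : Type*} {σ : α → α} (hσ : σ.Involutive)
    {M : Multiset α} (hcard : Even M.card) (hmap : M.map σ = M) {c : α}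
    (hfix : ∀ a ∈ M, σ a = a → a = c) : ∃ N : Multiset α, M = N + N.map σ := by
  obtain ⟨n, hn⟩ := hcard
  induction n generalizing M with
  | zero => exact ⟨0, by simpa using hn⟩
  | succ n ih =>
    by_cases hall : ∀ a ∈ M, σ a = a
    · refine ⟨Multiset.replicate (n + 1) c, ?_⟩
      have hM := Multiset.eq_replicate.2 ⟨hn, fun a ha => hfix a ha (hall a ha)⟩
      have hc : σ c = c := hall c (hM ▸ Multiset.mem_replicate.2 ⟨by lia, rfl⟩)
      rw [hM, Multiset.map_replicate, hc, ← Multiset.replicate_add]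
    · push Not at hall
      obtain ⟨a, ha, hne⟩ := hall
      have hσa : σ a ∈ M := hmap ▸ Multiset.mem_map_of_mem σ ha
      obtain ⟨M, rfl⟩ := Multiset.exists_cons_of_mem ha
      obtain ⟨M, rfl⟩ := Multiset.exists_cons_of_mem ((Multiset.mem_cons.1 hσa).resolve_left hne)
      have hmap' : M.map σ = M := by
        rw [Multiset.map_cons, Multiset.map_cons, hσ a, Multiset.cons_swap] at hmap
        simpa only [Multiset.cons_inj_right] using hmap
      have hn' : M.card = n + n := by
        simp only [Multiset.card_cons] at hn
        lia
      obtain ⟨N, hN⟩ := ih hmap'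
        (fun b hb => hfix b (Multiset.mem_cons_of_mem (Multiset.mem_cons_of_mem hb))) hn'
      refine ⟨a ::ₘ N, ?_⟩
      rw [Multiset.map_cons, Multiset.cons_add, Multiset.add_cons, ← hN]

theorem reverse_map_of_injective {R S : Type*} [Semiring R] [Semiring S] {φ : R →+* S}
    (hφ : Function.Injective φ) (p : R[X]) : (p.map φ).reverse = p.reverse.map φ := by
  rw [reverse, reverse, natDegree_map_eq_of_injective hφ, reflect_map]

theorem reverse_pow_of_domain {R : Type*} [Semiring R] [NoZeroDivisors R] (p : R[X]) (n : ℕ) :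
    (p ^ n).reverse = p.reverse ^ n := by
  induction n with
  | zero => simpa only [pow_zero, C_1] using reverse_C (1 : R)
  | succ n ih => rw [pow_succ, pow_succ, reverse_mul_of_domain, ih]

section Reciprocal

variable {K : Type*} [Field K] {f : K[X]}

theorem reverse_X_sub_C {a : K} (ha : a ≠ 0) : (X - C a).reverse = C (-a) * (X - C a⁻¹) := by
  have hX : (X : K[X]).reverse = 1 := by
    rw [← one_mul X, reverse_mul_X, ← C_1, reverse_C]
  rw [sub_eq_add_neg, ← C_neg, reverse_add_C, hX, natDegree_X, pow_one, mul_sub, ← C_mul,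
    neg_mul, mul_inv_cancel₀ ha, C_neg, C_neg, C_1]
  ring

theorem X_sub_C_inv_pow_dvd_reverse {a : K} (ha : a ≠ 0) {n : ℕ} (h : (X - C a) ^ n ∣ f) :
    (X - C a⁻¹) ^ n ∣ f.reverse := by
  obtain ⟨g, rfl⟩ := h
  rw [reverse_mul_of_domain, reverse_pow_of_domain, reverse_X_sub_C ha, mul_pow, mul_right_comm]
  exact dvd_mul_left _ _

theorem rootMultiplicity_inv_of_reverse_eq_self (hf : f.reverse = f) (a : K) :
    f.rootMultiplicity a⁻¹ = f.rootMultiplicity a := by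
  obtain rfl | ha := eq_or_ne a 0
  · rw [inv_zero]
  obtain rfl | hf0 := eq_or_ne f 0
  · simp only [rootMultiplicity_zero]
  have hle {b : K} (hb : b ≠ 0) : f.rootMultiplicity b ≤ f.rootMultiplicity b⁻¹ := by
    rw [le_rootMultiplicity_iff hf0]
    nth_rewrite 2 [← hf]
    exact X_sub_C_inv_pow_dvd_reverse hb (pow_rootMultiplicity_dvd f b)
  exact le_antisymm (by simpa using hle (inv_ne_zero ha)) (hle ha)

theorem map_inv_roots_of_reverse_eq_self (hf : f.reverse = f) :
    f.roots.map (·⁻¹) = f.roots := by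
  classical
  ext a
  rw [← inv_inv a, Multiset.count_map_eq_count' _ _ inv_injective, count_roots, count_roots,
    inv_inv, rootMultiplicity_inv_of_reverse_eq_self hf]

theorem zero_notMem_roots_of_reverse_eq_self (hf : f.reverse = f) : (0 : K) ∉ f.roots := by
  intro h
  obtain ⟨hf0, hroot⟩ := mem_roots'.1 h
  rw [IsRoot.def, ← coeff_zero_eq_eval_zero, ← hf, coeff_zero_reverse] at hroot
  exact hf0 (leadingCoeff_eq_zero.1 hroot)

theorem exists_roots_eq_add_map_inv (hf : f.reverse = f) (hcard : Even f.roots.card)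
    (h1 : (1 : K) ∉ f.roots) : ∃ N : Multiset K, f.roots = N + N.map (·⁻¹) := by
  refine exists_eq_add_map_of_involutive inv_involutive hcard
    (map_inv_roots_of_reverse_eq_self hf) (c := -1) fun a ha hfix => ?_
  have h0 := zero_notMem_roots_of_reverse_eq_self hf
  obtain h | h | h := inv_eq_self₀.1 hfix
  · exact h
  · exact absurd (h ▸ ha) h0
  · exact absurd (h ▸ ha) h1

end Reciprocal

/-- The `m`-th cyclic resultant `Res(f, X ^ m - 1)` of `f`. -/
noncomputable def cyclicResultant {R : Type*} [CommRing R] (f : R[X]) (m : ℕ) : R :=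
  resultant f (X ^ m - 1)

section CyclicResultant

variable {R : Type*} [CommRing R] {f : R[X]}

theorem cyclicResultant_eq_prod_roots [IsDomain R] (hf : f.Monic) (hs : f.Splits) (m : ℕ) :
    cyclicResultant f m = (f.roots.map fun l => l ^ m - 1).prod := by
  rw [cyclicResultant, resultant_eq_prod_eval _ _ _ le_rfl hs, hf.leadingCoeff, one_pow, one_mul]
  simp only [eval_sub, eval_pow, eval_X, eval_one]

theorem natDegree_X_pow_sub_one [Nontrivial R] (m : ℕ) : (X ^ m - 1 : R[X]).natDegree = m := by
  rw [← C_1, natDegree_X_pow_sub_C]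

theorem map_cyclicResultant {S : Type*} [CommRing S] [Nontrivial S] (φ : R →+* S) (hf : f.Monic)
    (m : ℕ) : φ (cyclicResultant f m) = cyclicResultant (f.map φ) m := by
  have := φ.domain_nontrivial
  rw [cyclicResultant, cyclicResultant, natDegree_X_pow_sub_one, natDegree_X_pow_sub_one,
    hf.natDegree_map, ← resultant_map_map, Polynomial.map_sub, Polynomial.map_pow, map_X,
    Polynomial.map_one]

end CyclicResultant

/-- The sequence `b`, from index `1` on, obeys a polynomial recurrence of length `ℓ` with
coefficients in `K`; its values may lie in any `K`-algebra. -/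
def ObeysPolynomialRecurrence (K : Type*) [CommRing K] {B : Type*} [CommRing B] [Algebra K B]
    (b : ℕ → B) (ℓ : ℕ) : Prop :=
  ∃ P : MvPolynomial (Fin ℓ) K, P ≠ 0 ∧
    ∀ n : ℕ, 1 ≤ n → MvPolynomial.aeval (fun i : Fin ℓ => b (n + i)) P = 0

namespace ObeysPolynomialRecurrence

variable {K : Type*} [CommRing K] {A B : Type*} [CommRing A] [Algebra K A] [CommRing B]
  [Algebra K B] {b : ℕ → B} {ℓ : ℕ}

theorem congr {b' : ℕ → B} (h : ObeysPolynomialRecurrence K b ℓ)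
    (hb : ∀ m, 1 ≤ m → b' m = b m) : ObeysPolynomialRecurrence K b' ℓ := by
  obtain ⟨P, hP0, hP⟩ := h
  refine ⟨P, hP0, fun n hn => ?_⟩
  simp only [hb _ (le_add_right hn), hP n hn]

theorem of_map {φ : A →ₐ[K] B} (hφ : Function.Injective φ) {a : ℕ → A}
    (h : ObeysPolynomialRecurrence K (fun n => φ (a n)) ℓ) : ObeysPolynomialRecurrence K a ℓ := by
  obtain ⟨P, hP0, hP⟩ := h
  refine ⟨P, hP0, fun n hn => hφ ?_⟩
  rw [MvPolynomial.comp_aeval_apply, map_zero, hP n hn]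

theorem of_forall_eq_zero [Nontrivial K] (hb : ∀ n, 1 ≤ n → b n = 0) (ℓ : ℕ) :
    ObeysPolynomialRecurrence K b (ℓ + 1) :=
  ⟨MvPolynomial.X 0, MvPolynomial.X_ne_zero 0, fun n hn => by
    rw [MvPolynomial.aeval_X, hb _ (le_add_right hn)]⟩

theorem of_trdeg_lt [Nontrivial K] (htr : Algebra.trdeg K A < ℓ) (a : ℕ → A)
    (φ : ℕ → A →ₐ[K] B) (hφ : ∀ n i, φ n (a i) = b (n + i)) :
    ObeysPolynomialRecurrence K b ℓ := by
  have hdep : ¬ AlgebraicIndependent K fun i : Fin ℓ => a i := fun hind =>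
    htr.not_ge (by simpa using hind.lift_cardinalMk_le_trdeg)
  rw [algebraicIndependent_iff] at hdep
  push Not at hdep
  obtain ⟨P, hP, hP0⟩ := hdep
  refine ⟨P, hP0, fun n _ => ?_⟩
  simpa only [MvPolynomial.comp_aeval_apply, hφ, map_zero] using congrArg (φ n) hP

end ObeysPolynomialRecurrence

/-- The ring of Laurent polynomials over `R` in the variables `X j`, `j : ι`, obtained from the
polynomial ring by inverting the product of all variables. -/
abbrev MvLaurentPolynomial (ι R : Type*) [Fintype ι] [CommRing R] : Type _ :=
  Localization.Away (∏ j : ι, MvPolynomial.X j : MvPolynomial ι R)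

namespace MvLaurentPolynomial

open MvPolynomial (aeval)

variable {ι R B : Type*} [Fintype ι] [CommRing R] [CommRing B] [Algebra R B]

theorem isUnit_algebraMap_X (j : ι) :
    IsUnit (algebraMap (MvPolynomial ι R) (MvLaurentPolynomial ι R) (MvPolynomial.X j)) :=
  isUnit_of_dvd_unit
    (map_dvd (algebraMap _ _) (Finset.dvd_prod_of_mem MvPolynomial.X (Finset.mem_univ j)))
    (IsLocalization.Away.algebraMap_isUnit _)

/-- The `j`-th variable, as a unit of the ring of Laurent polynomials. -/
noncomputable def X (j : ι) : (MvLaurentPolynomial ι R)ˣ :=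
  (isUnit_algebraMap_X j).unit

theorem isUnit_aeval_prod_X (u : ι → Bˣ) :
    IsUnit (aeval (R := R) (fun j => (u j : B)) (∏ j, MvPolynomial.X j)) := by
  simp only [map_prod, MvPolynomial.aeval_X, ← Units.coe_prod, Units.isUnit]

/-- Evaluation of Laurent polynomials at a family of units. -/
noncomputable def eval (u : ι → Bˣ) : MvLaurentPolynomial ι R →ₐ[R] B :=
  IsLocalization.Away.liftAlgHom _ (isUnit_aeval_prod_X u)

theorem eval_X (u : ι → Bˣ) (j : ι) : eval u (X (R := R) j).val = u j :=
  (IsLocalization.Away.lift_eq _ (isUnit_aeval_prod_X u) _).trans (MvPolynomial.aeval_X _ _)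

theorem comp_eval {C : Type*} [CommRing C] [Algebra R C] (φ : B →ₐ[R] C) (u : ι → Bˣ) :
    φ.comp (eval u) = eval fun j => Units.map φ (u j) := by
  refine IsLocalization.algHom_ext (.powers (∏ j : ι, MvPolynomial.X j : MvPolynomial ι R)) ?_
  ext j
  change φ (eval u (X j).val) = eval _ (X j).val
  rw [eval_X, eval_X, Units.coe_map, MonoidHom.coe_coe]

section Domain

variable [IsDomain R]

theorem powers_prod_X_le_nonZeroDivisors :
    Submonoid.powers (∏ j : ι, MvPolynomial.X j : MvPolynomial ι R) ≤ nonZeroDivisors _ :=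
  powers_le_nonZeroDivisors_of_noZeroDivisors <|
    Finset.prod_ne_zero_iff.2 fun j _ => MvPolynomial.X_ne_zero j

instance : IsDomain (MvLaurentPolynomial ι R) :=
  IsLocalization.isDomain_localization powers_prod_X_le_nonZeroDivisors

instance : FaithfulSMul (MvPolynomial ι R) (MvLaurentPolynomial ι R) :=
  (faithfulSMul_iff_algebraMap_injective _ _).2
    (IsLocalization.injective _ powers_prod_X_le_nonZeroDivisors)

instance : FaithfulSMul R (MvLaurentPolynomial ι R) :=
  .trans R (MvPolynomial ι R) _

theorem trdeg_eq_card : Algebra.trdeg R (MvLaurentPolynomial ι R) = Fintype.card ι := by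
  have : Algebra.IsAlgebraic (MvPolynomial ι R) (MvLaurentPolynomial ι R) :=
    IsLocalization.isAlgebraic _ (.powers (∏ j : ι, MvPolynomial.X j))
  have h := lift_trdeg_add_eq R (MvPolynomial ι R) (MvLaurentPolynomial ι R)
  simpa [trdeg_eq_zero] using h.symm

theorem trdeg_eq_card_of_isAlgebraic (K : Type*) [CommRing K] [Algebra K R]
    [FaithfulSMul K R] [Algebra.IsAlgebraic K R] :
    Algebra.trdeg K (MvLaurentPolynomial ι R) = Fintype.card ι := by
  have := (algebraMap K R).domain_nontrivial
  have h := lift_trdeg_add_eq K R (MvLaurentPolynomial ι R)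
  simpa [trdeg_eq_zero, trdeg_eq_card] using h.symm

theorem obeysPolynomialRecurrence_eval_pow (K : Type*) [CommRing K] [Algebra K R]
    [FaithfulSMul K R] [Algebra.IsAlgebraic K R] (F : MvLaurentPolynomial ι R) (μ : ι → Rˣ) :
    ObeysPolynomialRecurrence K (fun n => eval (fun j => μ j ^ n) F) (Fintype.card ι + 1) := by
  have := (algebraMap K R).domain_nontrivial
  let shift (i : ℕ) : MvLaurentPolynomial ι R →ₐ[R] MvLaurentPolynomial ι R :=
    eval fun j => Units.map (algebraMap R (MvLaurentPolynomial ι R) : _ →* _) (μ j ^ i) * X j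
  refine .of_trdeg_lt (by rw [trdeg_eq_card_of_isAlgebraic]; exact_mod_cast Nat.lt_succ_self _)
    (fun i => shift i F) (fun n => (eval fun j => μ j ^ n).restrictScalars K) fun n i => ?_
  have hcomp : (eval fun j => μ j ^ n).comp (shift i) = eval (R := R) fun j => μ j ^ (n + i) := by
    rw [comp_eval]
    congr! 2 with j
    ext
    simp [pow_add, mul_comm, eval_X]
  exact DFunLike.congr_fun hcomp F

end Domain

end MvLaurentPolynomial

theorem obeysPolynomialRecurrence_prod_pow_sub_one (K : Type*) [CommRing K]
    {L : Type*} [Field L] [Algebra K L] [FaithfulSMul K L] [Algebra.IsAlgebraic K L]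
    {N : Multiset L} (h0 : (0 : L) ∉ N) :
    ObeysPolynomialRecurrence K (fun n => (N.map fun l => (l ^ n - 1) * (l⁻¹ ^ n - 1)).prod)
      (N.card + 1) := by
  classical
  let μ (x : N) : Lˣ := Units.mk0 x fun h => h0 (h ▸ Multiset.coe_mem)
  let F : MvLaurentPolynomial N L := ∏ x,
    ((MvLaurentPolynomial.X x).val - 1) * ((MvLaurentPolynomial.X x)⁻¹.val - 1)
  rw [← Multiset.card_coe]
  refine (MvLaurentPolynomial.obeysPolynomialRecurrence_eval_pow K F μ).congr fun n _ => ?_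
  rw [← Multiset.map_univ]
  simp [F, μ, MvLaurentPolynomial.eval_X]

theorem obeysPolynomialRecurrence_cyclicResultant_of_splits (K : Type*) [CommRing K]
    {L : Type*} [Field L] [Algebra K L] [FaithfulSMul K L] [Algebra.IsAlgebraic K L] {f : L[X]}
    (hf : f.Monic) (hs : f.Splits) (heven : Even f.natDegree) (hrecip : f.reverse = f) :
    ObeysPolynomialRecurrence K (cyclicResultant f) (f.natDegree / 2 + 1) := by
  have := (algebraMap K L).domain_nontrivial
  have hprod := cyclicResultant_eq_prod_roots hf hs
  by_cases h1 : 1 ∈ f.roots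
  · refine .of_forall_eq_zero (fun m _ => (hprod m).trans ?_) _
    exact Multiset.prod_eq_zero (Multiset.mem_map.2 ⟨1, h1, by rw [one_pow, sub_self]⟩)
  rw [hs.natDegree_eq_card_roots] at heven ⊢
  obtain ⟨N, hN⟩ := exists_roots_eq_add_map_inv hrecip heven h1
  have hN0 : 0 ∉ N := fun h =>
    zero_notMem_roots_of_reverse_eq_self hrecip (hN ▸ Multiset.mem_add.2 (.inl h))
  have hcard : f.roots.card / 2 = N.card := by
    rw [hN, Multiset.card_add, Multiset.card_map]
    lia
  rw [hcard]
  refine (obeysPolynomialRecurrence_prod_pow_sub_one K hN0).congr fun m _ => (hprod m).trans ?_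
  rw [hN, Multiset.map_add, Multiset.prod_add, Multiset.map_map, ← Multiset.prod_map_mul]
  rfl

theorem cyclic_resultants_polynomial_recurrence_reciprocal_general {K : Type*} [Field K]
    {f : K[X]} (hf : f.Monic) (heven : Even f.natDegree) (hrecip : f.reverse = f) :
    ObeysPolynomialRecurrence K (cyclicResultant f) (f.natDegree / 2 + 1) := by
  let φ := algebraMap K f.SplittingField
  have hrecip' : (f.map φ).reverse = f.map φ := by rw [reverse_map_of_injective φ.injective, hrecip]
  have hdeg : (f.map φ).natDegree = f.natDegree := natDegree_map φ
  have h := obeysPolynomialRecurrence_cyclicResultant_of_splits K (hf.map φ)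
    (SplittingField.splits f) (hdeg ▸ heven) hrecip'
  rw [hdeg] at h
  exact .of_map (φ := Algebra.ofId K f.SplittingField) φ.injective
    (h.congr fun m _ => map_cyclicResultant φ hf m)

/-- The cyclic resultants of a monic reciprocal polynomial of even degree `d` over an
algebraically closed field of characteristic zero satisfy a polynomial recurrence of
length `d/2 + 1`.  Reciprocal means `x^d f(1/x) = f(x)`, i.e. `f.reverse = f`. -/
theorem cyclic_resultants_polynomial_recurrence_reciprocal
    {K : Type*} [Field K] [IsAlgClosed K] [CharZero K]
    (d : ℕ) (hd : Even d) (f : Polynomial K) (hf : f.Monic) (hdeg : f.natDegree = d)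
    (hrecip : f.reverse = f)
    (r : ℕ → K) (hr : ∀ m : ℕ, 1 ≤ m → r m = (f.roots.map fun l => l ^ m - 1).prod) :
    ∃ P : MvPolynomial (Fin (d / 2 + 1)) K, P ≠ 0 ∧
      ∀ n : ℕ, 1 ≤ n → MvPolynomial.eval (fun i : Fin (d / 2 + 1) => r (n + i)) P = 0 := by
  subst hdeg
  refine (cyclic_resultants_polynomial_recurrence_reciprocal_general hf hd hrecip).congr
    fun m hm => ?_
  rw [hr m hm, cyclicResultant_eq_prod_roots hf (IsAlgClosed.splits f)]
end

section
/- Let K be an algebraically closed field of characteristic zero, let c_1, …, c_t and μ_1, …, μ_t be nonzero elements of K with the μ_i distinct, and let a ∈ S be the sequence a = ∑_{i=1}^t c_i e(μ_i). Let Q ⊆ K^* be the multiplicative submonoid generated by μ_1, …, μ_t. Then the K-algebra homomorphism from the monoid algebra K[Q] to S sending the basis element [μ] to the exponential sequence e(μ) is injective, and its image equals the K-subalgebra R = K[a, Ea, E²a, …] of S generated by a and all its shifts E^j a. In particular R is isomorphic as a K-algebra to K[Q]. -/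
/-!
Each `e(μ)` is an eigenvector of the shift `E` with eigenvalue `μ`, so for a polynomial `p` the
combination `p(E) a` of the shifts of `a` is `∑ c i * p(μ i) • e(μ i)`. Letting `p` run through the
Lagrange basis at the distinct nodes `μ i` isolates every `e(μ i)`; hence the shifts of `a` and the
sequences `e(μ i)` have the same span, and generate the same algebra. Since `e` is multiplicative,
this algebra is the image of `K[Q]`. Injectivity is the linear independence of the
sequences `e(q)`, `q ≠ 0`, an instance of Dedekind's linear independence of characters.
-/

open Submodule Polynomial

section MonoidAlgebra

variable {R M A : Type*} [CommSemiring R] [Monoid M] [Semiring A] [Algebra R A]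

theorem algHom_monoidAlgebra_injective_iff_linearIndependent (Φ : MonoidAlgebra R M →ₐ[R] A) :
    Function.Injective Φ ↔ LinearIndependent R fun m => Φ (MonoidAlgebra.of R M m) := by
  have hcomp : Finsupp.linearCombination R (fun m => Φ (MonoidAlgebra.of R M m)) =
      Φ.toLinearMap ∘ₗ (MonoidAlgebra.basis M R).repr.symm.toLinearMap := by
    ext m
    simp
  rw [LinearIndependent, hcomp]
  exact ((MonoidAlgebra.basis M R).repr.symm.injective_comp Φ).symm

theorem toSubmodule_range_algHom_monoidAlgebra (Φ : MonoidAlgebra R M →ₐ[R] A) :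
    Subalgebra.toSubmodule Φ.range =
      span R (Set.range fun m => Φ (MonoidAlgebra.of R M m)) :=
  calc Subalgebra.toSubmodule Φ.range
      = (⊤ : Submodule R _).map Φ.toLinearMap := LinearMap.range_eq_map Φ.toLinearMap
    _ = span R (Set.range fun m => Φ (MonoidAlgebra.of R M m)) := by
        rw [← (MonoidAlgebra.basis M R).span_eq, map_span, ← Set.range_comp]
        rfl

theorem range_algHom_monoidAlgebra_closure {s : Set M}
    (Φ : MonoidAlgebra R (Submonoid.closure s) →ₐ[R] A) (f : M →* A)
    (hΦ : ∀ q, Φ (MonoidAlgebra.of R _ q) = f q) :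
    Φ.range = Algebra.adjoin R (f '' s) := by
  apply Subalgebra.toSubmodule_injective
  rw [toSubmodule_range_algHom_monoidAlgebra, funext hΦ, Algebra.adjoin_eq_span,
    ← MonoidHom.map_mclosure, Submonoid.coe_map, Set.image_eq_range]
  rfl

end MonoidAlgebra

theorem zero_notMem_submonoidClosure {M : Type*} [MonoidWithZero M] [NoZeroDivisors M]
    [Nontrivial M] {s : Set M} (hs : 0 ∉ s) : 0 ∉ Submonoid.closure s := by
  have hle : Submonoid.closure s ≤ nonZeroDivisors M := Submonoid.closure_le.2 fun x hx =>
    mem_nonZeroDivisors_of_ne_zero (ne_of_mem_of_not_mem hx hs)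
  exact fun h => zero_notMem_nonZeroDivisors (hle h)

theorem aeval_apply_mem_span_range_pow_apply {R V : Type*} [CommSemiring R] [AddCommMonoid V]
    [Module R V] (E : Module.End R V) (p : R[X]) (x : V) :
    aeval E p x ∈ span R (Set.range fun j : ℕ => (E ^ j) x) := by
  rw [aeval_eq_sum_range, LinearMap.sum_apply]
  exact sum_mem fun j _ => smul_mem _ _ (subset_span ⟨j, rfl⟩)

theorem aeval_apply_sum_smul_of_apply_eq_smul {R V ι : Type*} [CommRing R] [AddCommGroup V]
    [Module R V] [Fintype ι] {E : Module.End R V} {μ : ι → R} {v : ι → V}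
    (hv : ∀ i, E (v i) = μ i • v i) (p : R[X]) (c : ι → R) :
    aeval E p (∑ i, c i • v i) = ∑ i, (c i * p.eval (μ i)) • v i := by
  simp only [map_sum, map_smul, Module.End.aeval_apply_of_mem_apply_eq_smul (hv _), mul_smul]

theorem span_range_pow_apply_sum_smul_eq_span_range {K V ι : Type*} [Field K] [AddCommGroup V]
    [Module K V] [Fintype ι] {E : Module.End K V} {μ c : ι → K} {v : ι → V}
    (hv : ∀ i, E (v i) = μ i • v i) (hμ : Function.Injective μ) (hc : ∀ i, c i ≠ 0) :
    span K (Set.range fun j : ℕ => (E ^ j) (∑ i, c i • v i)) = span K (Set.range v) := by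
  classical
  apply le_antisymm <;> rw [span_le]
  · rintro _ ⟨j, rfl⟩
    have hpow : (E ^ j) (∑ i, c i • v i) = ∑ i, (c i * μ i ^ j) • v i := by
      simpa using aeval_apply_sum_smul_of_apply_eq_smul hv (X ^ j) c
    simp only [hpow]
    exact sum_mem fun i _ => smul_mem _ _ (subset_span ⟨i, rfl⟩)
  · rintro _ ⟨i, rfl⟩
    have hbasis : aeval E (Lagrange.basis Finset.univ μ i) (∑ k, c k • v k) = c i • v i := by
      rw [aeval_apply_sum_smul_of_apply_eq_smul hv, Fintype.sum_eq_single i,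
        Lagrange.eval_basis_self hμ.injOn (Finset.mem_univ i), mul_one]
      intro k hk
      rw [Lagrange.eval_basis_of_ne hk.symm (Finset.mem_univ k), mul_zero, zero_smul]
    rw [SetLike.mem_coe, ← smul_mem_iff _ (hc i), ← hbasis]
    exact aeval_apply_mem_span_range_pow_apply E _ _

/-- The shift operator `E` on sequences, `(E a) n = a (n + 1)`. -/
def seqShift (R : Type*) [Semiring R] : Module.End R (ℕ → R) :=
  LinearMap.funLeft R R (· + 1)

/-- The exponential sequence `e(x)`, bundled as a multiplicative map in `x`. Position `n` holds
the term of index `n + 1` of a sequence indexed from `1`. -/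
def expSeq (R : Type*) [CommMonoid R] : R →* (ℕ → R) :=
  MonoidHom.pi fun n => powMonoidHom (n + 1)

theorem expSeq_apply {R : Type*} [CommMonoid R] (x : R) (n : ℕ) : expSeq R x n = x ^ (n + 1) :=
  rfl

theorem seqShift_pow_apply {R : Type*} [Semiring R] (j : ℕ) (a : ℕ → R) :
    (seqShift R ^ j) a = fun n => a (n + j) := by
  induction j with
  | zero => rfl
  | succ j ih =>
    rw [pow_succ', Module.End.mul_apply, ih]
    funext n
    exact congrArg a (Nat.succ_add_eq_add_succ n j)

theorem seqShift_expSeq {R : Type*} [CommSemiring R] (x : R) :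
    seqShift R (expSeq R x) = x • expSeq R x :=
  funext fun n => pow_succ' x (n + 1)

theorem linearIndepOn_expSeq (R : Type*) [CommRing R] [IsDomain R] :
    LinearIndepOn R (expSeq R) {0}ᶜ := by
  have hpow : LinearIndependent R fun x : R => ⇑(powersHom R x) :=
    (linearIndependent_monoidHom (Multiplicative ℕ) R).comp _ (powersHom R).injective
  rw [linearIndepOn_iff']
  intro s g hs hg x hx
  have hsum : ∑ y ∈ s, (g y * y) • ⇑(powersHom R y) = 0 := by
    funext n
    simpa [expSeq_apply, pow_succ', mul_assoc] using congrFun hg n.toAdd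
  exact (mul_eq_zero.1 (linearIndependent_iff'.1 hpow s _ hsum x hx)).resolve_right (hs hx)

theorem adjoin_shifts_eq_adjoin_expSeq {K ι : Type*} [Field K] [Fintype ι] {c μ : ι → K}
    (hc : ∀ i, c i ≠ 0) (hμ : Function.Injective μ) {a : ℕ → K}
    (ha : a = fun n => ∑ i, c i * μ i ^ (n + 1)) :
    Algebra.adjoin K (Set.range fun j : ℕ => fun n => a (n + j)) =
      Algebra.adjoin K (expSeq K '' Set.range μ) := by
  have ha_expSeq : a = ∑ i, c i • expSeq K (μ i) := by
    funext n
    simp [ha, expSeq_apply]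
  have hspan := span_range_pow_apply_sum_smul_eq_span_range (fun i => seqShift_expSeq (μ i)) hμ hc
  simp only [← ha_expSeq, seqShift_pow_apply] at hspan
  rw [← Algebra.adjoin_span, hspan, Algebra.adjoin_span, ← Set.range_comp, Function.comp_def]

theorem monoid_algebra_iso_shift_algebra_simple_general
    {K ι : Type*} [Field K] [Fintype ι]
    (c μ : ι → K) (hc : ∀ i, c i ≠ 0) (hμ0 : ∀ i, μ i ≠ 0) (hμ : Function.Injective μ)
    (a : ℕ → K) (ha : a = fun n => ∑ i, c i * μ i ^ (n + 1))
    (Q : Submonoid K) (hQ : Q = Submonoid.closure (Set.range μ))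
    (Φ : MonoidAlgebra K ↥Q →ₐ[K] (ℕ → K))
    (hΦ : ∀ q : ↥Q, Φ (MonoidAlgebra.of K ↥Q q) = fun n => (q : K) ^ (n + 1)) :
    Function.Injective Φ ∧
      Φ.range = Algebra.adjoin K (Set.range fun j : ℕ => fun n => a (n + j)) := by
  subst hQ
  have hexp : ∀ q, Φ (MonoidAlgebra.of K _ q) = expSeq K q := hΦ
  constructor
  · have h0 : (0 : K) ∉ Submonoid.closure (Set.range μ) :=
      zero_notMem_submonoidClosure fun ⟨i, hi⟩ => hμ0 i hi
    rw [algHom_monoidAlgebra_injective_iff_linearIndependent, funext hexp]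
    exact (linearIndepOn_expSeq K).mono (Set.subset_compl_singleton_iff.2 h0)
  · rw [adjoin_shifts_eq_adjoin_expSeq hc hμ ha]
    exact range_algHom_monoidAlgebra_closure Φ (expSeq K) hexp

/-- Let `S = ℕ → K` be the `K`-algebra of sequences `(a_1, a_2, …)` (position `n`
records the term `a_{n+1}`), let `a` be the sequence `a_n = ∑ c i * μ i ^ n` with
nonzero `c i` and distinct nonzero `μ i`, and let `Q ⊆ K` be the multiplicative
submonoid generated by the `μ i`.  Then the `K`-algebra homomorphism
`Φ : K[Q] → S` sending the basis element `[q]` to the exponential sequence `e(q)`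
is injective, and its image is the subalgebra `R = K[a, Ea, E²a, …]` generated by
`a` and its shifts. -/
theorem monoid_algebra_iso_shift_algebra_simple
    {K : Type*} [Field K] [IsAlgClosed K] [CharZero K]
    (t : ℕ) (c μ : Fin t → K) (hc : ∀ i, c i ≠ 0) (hμ0 : ∀ i, μ i ≠ 0)
    (hμ : Function.Injective μ)
    (a : ℕ → K) (ha : a = fun n => ∑ i, c i * μ i ^ (n + 1))
    (Q : Submonoid K) (hQ : Q = Submonoid.closure (Set.range μ))
    (Φ : MonoidAlgebra K ↥Q →ₐ[K] (ℕ → K))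
    (hΦ : ∀ q : ↥Q, Φ (MonoidAlgebra.of K ↥Q q) = fun n => (q : K) ^ (n + 1)) :
    Function.Injective Φ ∧
      Φ.range = Algebra.adjoin K (Set.range fun j : ℕ => fun n => a (n + j)) :=
  monoid_algebra_iso_shift_algebra_simple_general c μ hc hμ0 hμ a ha Q hQ Φ hΦ
end

section
/- Let K be an algebraically closed field of characteristic zero, let A be a finitely generated abelian group (written multiplicatively) with a fixed set of generators q_1, …, q_ℓ, and let Q ⊆ A be the submonoid generated by q_1, …, q_ℓ. Then the following three quantities are equal: (1) the rank of A, i.e. dim_ℚ(ℚ ⊗_ℤ A); (2) the Krull dimension of the monoid algebra K[Q]; (3) the maximum cardinality of a subset of K[Q] that is algebraically independent over K. -/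
open scoped TensorProduct

/-!
Modulo a suitable prime, an algebraically independent family stays independent, so transcendence
degrees over a domain can be computed in domains, where they are the cardinality of any
transcendence basis. This makes the transcendence degree invariant under integral extensions, and
Noether normalization then identifies it with the Krull dimension of any nonzero finitely generated
algebra over a field.

For `K[Q]` the transcendence degree is the rank of `A`. Elements of `Q` that are linearly
independent in `A` have pairwise distinct monomials, hence are algebraically independent in `K[Q]`;
and `Q` contains a maximal independent subset of `A`. Conversely, every domain quotient of `K[Q]` is
generated by the image of `Q`, so it has a transcendence basis consisting of images of elements of
`Q`. A nontrivial relation between these elements in `A` would identify two distinct monomials in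
the basis, so they are linearly independent in `A`.
-/

open Cardinal Function nonZeroDivisors

universe u v w

section KrullDimension

theorem ringKrullDim_eq_of_isIntegral (R S : Type*) [CommRing R] [CommRing S] [Algebra R S]
    [Algebra.IsIntegral R S] [FaithfulSMul R S] : ringKrullDim S = ringKrullDim R := by
  apply le_antisymm
  · exact Order.krullDim_le_of_strictMono (PrimeSpectrum.comap (algebraMap R S)) fun I J h ↦
      Ideal.IsIntegral.comap_lt_comap (R := R) (I := I.asIdeal) (J := J.asIdeal) h
  · refine iSup_le fun l ↦ ?_
    obtain ⟨P, hP⟩ := Algebra.IsIntegral.comap_surjective R S l.head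
    have : P.asIdeal.LiesOver l.head.asIdeal := ⟨congrArg PrimeSpectrum.asIdeal hP.symm⟩
    obtain ⟨L, hL, -⟩ := Ideal.exists_ltSeries_of_hasGoingUp l P.asIdeal
    exact hL ▸ Order.LTSeries.length_le_krullDim L

end KrullDimension

section TranscendenceDegree

variable {R : Type*} {A : Type u} {B : Type v} [CommRing R] [CommRing A] [CommRing B]
  [Algebra R A] [Algebra R B]

theorem exists_isPrime_algebraicIndependent_mk [IsDomain R] {ι : Type*} {x : ι → A}
    (hx : AlgebraicIndependent R x) :
    ∃ P : Ideal A, P.IsPrime ∧ AlgebraicIndependent R fun i ↦ Ideal.Quotient.mkₐ R P (x i) := by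
  obtain ⟨P, hP, hcomap⟩ := Ideal.exists_comap_eq_of_mem_minimalPrimes_of_injective
    (f := (MvPolynomial.aeval x : MvPolynomial ι R →ₐ[R] A).toRingHom) hx ⊥
    (by simp [IsDomain.minimalPrimes_eq_singleton_bot])
  refine ⟨P, hP, algebraicIndependent_iff.mpr fun p hp ↦ ?_⟩
  rw [← MvPolynomial.comp_aeval_apply] at hp
  have hmem : p ∈ P.comap (MvPolynomial.aeval x : MvPolynomial ι R →ₐ[R] A).toRingHom :=
    (Ideal.Quotient.eq_zero_iff_mem (I := P)).mp hp
  rwa [hcomap] at hmem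

theorem lift_trdeg_le_of_forall_isPrime [IsDomain R] {c : Cardinal.{max u w}}
    (h : ∀ P : Ideal A, P.IsPrime → FaithfulSMul R (A ⧸ P) →
      lift.{w} (Algebra.trdeg R (A ⧸ P)) ≤ c) :
    lift.{w} (Algebra.trdeg R A) ≤ c := by
  rw [Algebra.trdeg, lift_iSup bddAbove_of_small]
  refine ciSup_le' fun s ↦ ?_
  obtain ⟨P, hP, hs⟩ := exists_isPrime_algebraicIndependent_mk s.2
  have hfaithful := (faithfulSMul_iff_algebraMap_injective R (A ⧸ P)).mpr hs.algebraMap_injective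
  exact (lift_le.mpr hs.cardinalMk_le_trdeg).trans (h P hP hfaithful)

variable [Algebra A B] [IsScalarTower R A B]

variable (R A B) in
theorem lift_trdeg_eq_of_isIntegral [IsDomain R] [Algebra.IsIntegral A B] [FaithfulSMul A B] :
    lift.{u} (Algebra.trdeg R B) = lift.{v} (Algebra.trdeg R A) := by
  refine le_antisymm (lift_trdeg_le_of_forall_isPrime fun P _ hfaithful ↦ ?_)
    (lift_trdeg_le_of_injective (IsScalarTower.toAlgHom R A B)
      (FaithfulSMul.algebraMap_injective A B))
  have : FaithfulSMul R (A ⧸ P.under A) := FaithfulSMul.tower_bot R (A ⧸ P.under A) (B ⧸ P)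
  calc lift.{u} (Algebra.trdeg R (B ⧸ P))
      = lift.{v} (Algebra.trdeg R (A ⧸ P.under A)) := by
        rw [← lift_trdeg_add_eq R (A ⧸ P.under A) (B ⧸ P),
          trdeg_eq_zero (R := A ⧸ P.under A), lift_zero, add_zero]
    _ ≤ lift.{v} (Algebra.trdeg R A) :=
        lift_le.mpr (trdeg_le_of_surjective (Ideal.Quotient.mkₐ R _)
          (Ideal.Quotient.mkₐ_surjective R _))

theorem ringKrullDim_eq_toENat_trdeg (k : Type*) [Field k] (A : Type u) [CommRing A] [Nontrivial A]
    [Algebra k A] [Algebra.FiniteType k A] :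
    ringKrullDim A = (Algebra.trdeg k A).toENat := by
  obtain ⟨s, g, hinj, hint⟩ := exists_integral_inj_algHom_of_fg k A
  algebraize [g.toRingHom]
  have : FaithfulSMul (MvPolynomial (Fin s) k) A :=
    (faithfulSMul_iff_algebraMap_injective _ _).mpr hinj
  have hdim : ringKrullDim A = s := by
    rw [ringKrullDim_eq_of_isIntegral (MvPolynomial (Fin s) k) A,
      MvPolynomial.ringKrullDim_of_isNoetherianRing, ringKrullDim_eq_zero_of_field]
    simp
  have htrdeg : Algebra.trdeg k A = s := by
    simpa [MvPolynomial.trdeg_of_isDomain] using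
      lift_trdeg_eq_of_isIntegral k (MvPolynomial (Fin s) k) A
  simp [hdim, htrdeg]

theorem exists_algebraicIndependent_fin_iff [Nontrivial R] [FaithfulSMul R A] {n : ℕ} :
    (∃ x : Fin n → A, AlgebraicIndependent R x) ↔ n ≤ Algebra.trdeg R A := by
  refine ⟨fun ⟨x, hx⟩ ↦ by simpa using hx.lift_cardinalMk_le_trdeg, fun h ↦ ?_⟩
  cases n with
  | zero => exact ⟨Fin.elim0, algebraicIndependent_empty_type_iff.mpr
      (FaithfulSMul.algebraMap_injective R A)⟩
  | succ m =>
    obtain ⟨s, hs⟩ := exists_lt_of_lt_ciSup' ((Nat.cast_lt.mpr m.lt_succ_self).trans_le h)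
    obtain ⟨e⟩ : Nonempty (Fin (m + 1) ↪ s.1) := by
      rw [← lift_mk_le']
      simpa using add_one_le_of_lt hs
    exact ⟨_, s.2.comp e e.injective⟩

end TranscendenceDegree

section LinearIndependence

theorem linearIndependent_int_of_nat {ι M : Type*} [AddCommGroup M] {v : ι → M}
    (hv : LinearIndependent ℕ v) : LinearIndependent ℤ v := by
  rw [linearIndependent_iff]
  intro g hg
  have hparts : g.mapRange Int.toNat rfl = (-g).mapRange Int.toNat rfl := by
    apply hv
    rw [← sub_eq_zero, ← hg]
    simp only [Finsupp.linearCombination_apply]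
    rw [Finsupp.sum_mapRange_index (by simp), Finsupp.sum_mapRange_index (by simp),
      Finsupp.sum_neg_index (by simp), ← Finsupp.sum_sub]
    refine Finsupp.sum_congr fun i _ ↦ ?_
    rw [← natCast_zsmul, ← natCast_zsmul, ← sub_smul, Int.toNat_sub_toNat_neg]
  ext i
  have hi : (g i).toNat = (-g i).toNat := DFunLike.congr_fun hparts i
  simp only [Finsupp.zero_apply]
  omega

theorem exists_linearIndepOn_mk_eq_rank_of_span_eq_top {R : Type u} {M : Type v} [CommRing R]
    [IsDomain R] [AddCommGroup M] [Module R M] {s : Set M} (hs : Submodule.span R s = ⊤) :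
    ∃ t ⊆ s, LinearIndepOn R id t ∧ #t = Module.rank R M := by
  let f := LocalizedModule.mkLinearMap R⁰ M
  obtain ⟨t, hts, -, hspan, hli⟩ := exists_linearIndepOn_extension (K := FractionRing R) (v := f)
    (linearIndepOn_empty _ _) s.empty_subset
  have hspan_top : ⊤ ≤ Submodule.span (FractionRing R) (Set.range fun x : t ↦ f x) := by
    rw [← span_eq_top_of_isLocalizedModule (FractionRing R) R⁰ f hs, ← Set.image_eq_range]
    exact Submodule.span_le.mpr hspan
  refine ⟨t, hts, (hli.restrict_scalars' R).of_comp f, lift_injective.{max u v} ?_⟩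
  rw [← IsLocalizedModule.lift_rank_eq R⁰ f le_rfl,
    ← IsLocalization.rank_eq (FractionRing R) R⁰ le_rfl,
    ← (Module.Basis.mk hli hspan_top).mk_eq_rank]

end LinearIndependence

section MonoidAlgebra

theorem linearIndependent_ofMul_of_algebraicIndependent {R A ι : Type*} [CommRing R] [Nontrivial R]
    [CommRing A] [Algebra R A] {x : ι → A} (hx : AlgebraicIndependent R x) :
    LinearIndependent ℕ fun i ↦ Additive.ofMul (x i) := by
  intro d e hde
  refine MvPolynomial.monomial_left_injective (one_ne_zero (α := R)) (hx ?_)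
  simpa [MvPolynomial.aeval_monomial, Finsupp.linearCombination_apply, Finsupp.prod, Finsupp.sum,
    ← ofMul_pow, ← ofMul_prod] using hde

theorem algebraicIndependent_of_of_linearIndependent {R M ι : Type*} [CommRing R] [CommMonoid M]
    {v : ι → M} (hv : LinearIndependent ℕ fun i ↦ Additive.ofMul (v i)) :
    AlgebraicIndependent R fun i ↦ MonoidAlgebra.of R M (v i) := by
  let φ : Multiplicative (ι →₀ ℕ) →* M := AddMonoidHom.toMultiplicativeLeft
    (Finsupp.linearCombination ℕ fun i ↦ Additive.ofMul (v i)).toAddMonoidHom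
  have haeval : MvPolynomial.aeval (fun i ↦ MonoidAlgebra.of R M (v i)) =
      (MonoidAlgebra.mapDomainAlgHom R R φ).comp
        (AddMonoidAlgebra.toMultiplicativeAlgEquiv R R (ι →₀ ℕ)).toAlgHom := by
    apply MvPolynomial.algHom_ext
    intro i
    rw [MvPolynomial.aeval_X]
    simp [MvPolynomial.X, MvPolynomial.monomial, φ]
  rw [algebraicIndependent_iff_injective_aeval, haeval]
  exact (MonoidAlgebra.mapDomain_injective (f := φ) hv).comp (AlgEquiv.injective _)

theorem adjoin_range_of_eq_top_of_surjective {R M D : Type*} [CommSemiring R] [CommMonoid M]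
    [Semiring D] [Algebra R D] (f : MonoidAlgebra R M →ₐ[R] D) (hf : Surjective f) :
    Algebra.adjoin R (Set.range fun m ↦ f (MonoidAlgebra.of R M m)) = ⊤ := by
  have hof : Algebra.adjoin R (Set.range (MonoidAlgebra.of R M)) = ⊤ := top_unique fun x _ ↦
    Algebra.adjoin_mono (Set.image_subset_range _ _) (MonoidAlgebra.mem_adjoin_support x)
  have hmap := congrArg (Subalgebra.map f) hof
  rwa [AlgHom.map_adjoin, ← Set.range_comp, Algebra.map_top, (AlgHom.range_eq_top f).mpr hf]
    at hmap

variable {R : Type u} {A : Type v} [CommRing R] [CommGroup A] {Q : Submonoid A}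

theorem lift_trdeg_le_lift_rank_of_surjective {D : Type w} [CommRing D] [IsDomain D]
    [Algebra R D] [FaithfulSMul R D] (f : MonoidAlgebra R Q →ₐ[R] D) (hf : Surjective f) :
    lift.{v} (Algebra.trdeg R D) ≤ lift.{w} (Module.rank ℤ (Additive A)) := by
  let φ : Q →* D := (f : MonoidAlgebra R Q →* D).comp (MonoidAlgebra.of R Q)
  have : Nontrivial R := (algebraMap R D).domain_nontrivial
  have : Algebra.IsIntegral (Algebra.adjoin R (Set.range φ)) D := by
    have hadjoin : Algebra.adjoin R (Set.range φ) = ⊤ := adjoin_range_of_eq_top_of_surjective f hf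
    rw [hadjoin]
    exact ⟨fun x ↦ isIntegral_algebraMap (R := (⊤ : Subalgebra R D)) (x := ⟨x, trivial⟩)⟩
  obtain ⟨t, ht, hbasis⟩ := exists_isTranscendenceBasis_subset (R := R) (Set.range φ)
  choose q hq using fun x : t ↦ ht x.2
  have hD : LinearIndependent ℕ fun x ↦ Additive.ofMul (φ (q x)) := by
    simpa only [hq] using linearIndependent_ofMul_of_algebraicIndependent hbasis.1
  have hQ : LinearIndependent ℕ fun x ↦ Additive.ofMul (q x) :=
    hD.of_comp φ.toAdditive.toNatLinearMap
  have hA : LinearIndependent ℕ fun x ↦ Additive.ofMul (q x : A) :=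
    hQ.map_of_injective_injectiveₛ id Q.subtype.toAdditive injective_id Subtype.val_injective
      fun n m ↦ map_nsmul _ n m
  rw [← hbasis.cardinalMk_eq_trdeg]
  exact (linearIndependent_int_of_nat hA).cardinal_lift_le_rank

theorem trdeg_monoidAlgebra_le_lift_rank [IsDomain R] :
    Algebra.trdeg R (MonoidAlgebra R Q) ≤ lift.{u} (Module.rank ℤ (Additive A)) := by
  rw [← lift_id'.{v, max u v} (Algebra.trdeg R (MonoidAlgebra R Q)), ← lift_umax.{v, u}]
  exact lift_trdeg_le_of_forall_isPrime fun P _ _ ↦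
    lift_trdeg_le_lift_rank_of_surjective (Ideal.Quotient.mkₐ R P)
      (Ideal.Quotient.mkₐ_surjective R P)

theorem lift_rank_le_trdeg_monoidAlgebra [Nontrivial R]
    (hQ : Subgroup.closure (Q : Set A) = ⊤) :
    lift.{u} (Module.rank ℤ (Additive A)) ≤ Algebra.trdeg R (MonoidAlgebra R Q) := by
  have hspan : Submodule.span ℤ (Additive.toMul ⁻¹' (Q : Set A)) = ⊤ := by
    rw [← Submodule.toAddSubgroup_inj, ← AddSubgroup.toIntSubmodule_closure]
    exact (Subgroup.toAddSubgroup_closure _).symm.trans (congrArg Subgroup.toAddSubgroup hQ)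
  obtain ⟨t, htQ, ht, hcard⟩ := exists_linearIndepOn_mk_eq_rank_of_span_eq_top hspan
  let q : t → Q := fun x ↦ ⟨x.1.toMul, htQ x.2⟩
  have hq : LinearIndependent ℕ fun x ↦ Additive.ofMul (q x) :=
    .of_comp Q.subtype.toAdditive.toNatLinearMap (ht.restrict_scalars' ℕ)
  have hle := (algebraicIndependent_of_of_linearIndependent (R := R) hq).lift_cardinalMk_le_trdeg
  rwa [hcard, lift_umax.{v, u}, lift_id'.{v, max u v}] at hle

theorem trdeg_monoidAlgebra_eq_lift_rank [IsDomain R] (hQ : Subgroup.closure (Q : Set A) = ⊤) :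
    Algebra.trdeg R (MonoidAlgebra R Q) = lift.{u} (Module.rank ℤ (Additive A)) :=
  trdeg_monoidAlgebra_le_lift_rank.antisymm (lift_rank_le_trdeg_monoidAlgebra hQ)

end MonoidAlgebra

theorem rank_eq_krullDim_eq_max_algebraically_independent_general
    {K : Type*} [Field K] (A : Type*) [CommGroup A] (Q : Submonoid A) (hfg : Q.FG)
    (hQ : Subgroup.closure (Q : Set A) = ⊤)
    (r : ℕ) (hr : r = Module.finrank ℚ (ℚ ⊗[ℤ] Additive A)) :
    ringKrullDim (MonoidAlgebra K Q) = (r : WithBot (WithTop ℕ)) ∧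
      (∃ v : Fin r → MonoidAlgebra K Q, AlgebraicIndependent K v) ∧
      ∀ n : ℕ, (∃ v : Fin n → MonoidAlgebra K Q, AlgebraicIndependent K v) → n ≤ r := by
  have : Monoid.FG Q := (Monoid.fg_iff_submonoid_fg Q).mpr hfg
  have : Module.Finite ℤ (Additive A) := by
    obtain ⟨S, rfl⟩ := hfg
    have : Group.FG A := ⟨S, top_unique <|
      hQ.ge.trans <| (Subgroup.closure_le _).mpr (Subgroup.le_closure_toSubmonoid _)⟩
    exact Module.Finite.iff_addGroup_fg.mpr inferInstance
  have htrdeg : Algebra.trdeg K (MonoidAlgebra K Q) = r := by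
    rw [trdeg_monoidAlgebra_eq_lift_rank hQ, hr,
      (TensorProduct.isBaseChange ℤ (Additive A) ℚ).finrank_eq, ← Module.finrank_eq_rank,
      lift_natCast]
  refine ⟨?_, ?_, fun n hn ↦ ?_⟩
  · rw [ringKrullDim_eq_toENat_trdeg K, htrdeg, toENat_nat]
    rfl
  · exact exists_algebraicIndependent_fin_iff.mpr htrdeg.ge
  · simpa [htrdeg] using exists_algebraicIndependent_fin_iff.mp hn

/-- For a finitely generated abelian group `A` with generators `q 1, …, q ℓ` and `Q ⊆ A`
the submonoid they generate, the following are equal: the rank of `A`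
(`dim_ℚ (ℚ ⊗_ℤ A)`), the Krull dimension of the monoid algebra `K[Q]`, and the maximum
number of elements of `K[Q]` algebraically independent over `K`. -/
theorem rank_eq_krullDim_eq_max_algebraically_independent
    {K : Type*} [Field K] [IsAlgClosed K] [CharZero K]
    (A : Type*) [CommGroup A] (ℓ : ℕ) (q : Fin ℓ → A)
    (hgen : Subgroup.closure (Set.range q) = ⊤)
    (Q : Submonoid A) (hQ : Q = Submonoid.closure (Set.range q))
    (r : ℕ) (hr : r = Module.finrank ℚ (ℚ ⊗[ℤ] Additive A)) :
    ringKrullDim (MonoidAlgebra K ↥Q) = (r : WithBot (WithTop ℕ)) ∧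
      (∃ v : Fin r → MonoidAlgebra K ↥Q, AlgebraicIndependent K v) ∧
      ∀ n : ℕ, (∃ v : Fin n → MonoidAlgebra K ↥Q, AlgebraicIndependent K v) → n ≤ r := by
  subst hQ
  exact rank_eq_krullDim_eq_max_algebraically_independent_general A _
    ((Submonoid.fg_iff _).mpr ⟨_, rfl, Set.finite_range q⟩)
    (top_unique (hgen ▸ Subgroup.closure_mono Submonoid.subset_closure)) r hr
end
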